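/- arXiv:2510.16426 — 5 statements merged into one kernel-verified Lean document; each statement's English description precedes it below -/
import Mathlib

section
/- Let L be a left Leibniz algebra over a field F of characteristic zero that is BMS-complete. Then Z^l(L) = Leib(L). -/
/-- The Leibniz kernel `Leib(L)`: the span of all squares `[x,x]`. -/
def leibnizKernel (F : Type*) [Field F] (L : Type*) [AddCommGroup L] [Module F L]
    (b : L →ₗ[F] L →ₗ[F] L) : Submodule F L :=
  Submodule.span F (Set.range fun x : L => b x x)

/-!
The left center of a left Leibniz algebra is the kernel of `x ↦ L_x`. The Leibniz identity makes
this map bracket-preserving into the Lie algebra of endomorphisms, so it sends a square `[x, x]` to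
`⁅L_x, L_x⁆ = 0`. Conversely, an element of the left center is central modulo the Leibniz kernel,
hence lies in the Leibniz kernel when the quotient has trivial center.
-/

/-- The left Leibniz identity for a bilinear bracket `b`: every left multiplication `b x` is a
derivation of `b`. The bracket is a bilinear map rather than an instance, so that an algebra is a
module together with `b`. -/
def IsLeftLeibniz {R L : Type*} [CommSemiring R] [AddCommMonoid L] [Module R L]
    (b : L →ₗ[R] L →ₗ[R] L) : Prop :=
  ∀ x y z : L, b x (b y z) = b y (b x z) + b (b x y) z

section

variable {R L : Type*} [CommSemiring R] [AddCommGroup L] [Module R L] {b : L →ₗ[R] L →ₗ[R] L}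

namespace IsLeftLeibniz

theorem leftMul_bracket (hb : IsLeftLeibniz b) (x y : L) :
    b (b x y) = ⁅(b x : Module.End R L), (b y : Module.End R L)⁆ :=
  LinearMap.ext fun z => eq_sub_of_add_eq' (hb x y z).symm

theorem leftMul_bracket_self (hb : IsLeftLeibniz b) (x : L) : b (b x x) = 0 :=
  (hb.leftMul_bracket x x).trans (Commute.refl (b x : Module.End R L)).lie_eq

theorem span_squares_le_ker (hb : IsLeftLeibniz b) :
    Submodule.span R (Set.range fun x : L => b x x) ≤ LinearMap.ker b :=
  Submodule.span_le.mpr (Set.range_subset_iff.mpr hb.leftMul_bracket_self)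

end IsLeftLeibniz

theorem stmt_6_general (hb : IsLeftLeibniz b)
    (hcenter : ∀ x : L, (∀ y : L, b x y ∈ Submodule.span R (Set.range fun u : L => b u u)) →
      x ∈ Submodule.span R (Set.range fun u : L => b u u)) :
    LinearMap.ker b = Submodule.span R (Set.range fun x : L => b x x) := by
  refine le_antisymm (fun x hx => hcenter x fun y => ?_) hb.span_squares_le_ker
  rw [LinearMap.mem_ker.mp hx, LinearMap.zero_apply]
  exact Submodule.zero_mem _

end

/-- If a left Leibniz algebra `L` over a field of characteristic zero is
BMS-complete (the quotient Lie algebra `L/Leib(L)` has trivial center, and every derivation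
`D` of `L` satisfies `Im(D - L_x) ⊆ Leib(L)` for some `x ∈ L`), then `Z^l(L) = Leib(L)`. -/
theorem stmt_6 (F : Type*) [Field F] [CharZero F] (L : Type*) [AddCommGroup L] [Module F L]
    (b : L →ₗ[F] L →ₗ[F] L)
    (hleib : ∀ x y z : L, b x (b y z) = b y (b x z) + b (b x y) z)
    -- trivial center of the quotient Lie algebra L/Leib(L)
    (hZ : ∀ x : L, (∀ y : L, b x y ∈ leibnizKernel F L b) → x ∈ leibnizKernel F L b)
    -- every derivation agrees with a left multiplication modulo Leib(L)
    (hComplete : ∀ D : L →ₗ[F] L, (∀ x y : L, D (b x y) = b (D x) y + b x (D y)) →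
      ∃ a : L, ∀ y : L, D y - b a y ∈ leibnizKernel F L b) :
    ∀ x : L, (∀ y : L, b x y = 0) ↔ x ∈ leibnizKernel F L b := by
  intro x
  rw [leibnizKernel, ← stmt_6_general hleib hZ, LinearMap.mem_ker, LinearMap.ext_iff]
  simp only [LinearMap.zero_apply]
end

section
/- Let L be a finite-dimensional left Leibniz algebra over a field F of characteristic zero that is BMS-complete. A bilinear map f : L × L → L is a biderivation of L if and only if there exist linear maps φ, ψ : L → L, a left biderivation p : L × L → L with values in Leib(L), and a right biderivation q : L × L → L with values in Leib(L), such that f(x,y) = [φ(x),y] + p(x,y) = [ψ(y),x] + q(x,y) for all x, y ∈ L. -/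
theorem exists_comp_eq_of_range_le_range {R M A C : Type*} [Semiring R]
    [AddCommMonoid M] [Module R M] [Module.Projective R M] [AddCommMonoid A] [Module R A]
    [AddCommMonoid C] [Module R C] (T : A →ₗ[R] C) (S : M →ₗ[R] C)
    (h : LinearMap.range S ≤ LinearMap.range T) : ∃ φ : M →ₗ[R] A, T ∘ₗ φ = S := by
  obtain ⟨φ, hφ⟩ := Module.projective_lifting_property T.rangeRestrict
    (S.codRestrict (LinearMap.range T) fun x => h ⟨x, rfl⟩) T.surjective_rangeRestrict
  exact ⟨φ, LinearMap.ext fun x => congrArg Subtype.val (LinearMap.congr_fun hφ x)⟩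

theorem exists_linearMap_forall_sub_mem {R M A B C : Type*} [CommRing R]
    [AddCommMonoid M] [Module R M] [Module.Projective R M] [AddCommMonoid A] [Module R A]
    [AddCommMonoid B] [Module R B] [AddCommGroup C] [Module R C]
    (b : A →ₗ[R] B →ₗ[R] C) (g : M →ₗ[R] B →ₗ[R] C) (K : Submodule R C)
    (h : ∀ x, ∃ a, ∀ y, g x y - b a y ∈ K) :
    ∃ φ : M →ₗ[R] A, ∀ x y, g x y - b (φ x) y ∈ K := by
  have range_le : LinearMap.range (g.compr₂ K.mkQ) ≤ LinearMap.range (b.compr₂ K.mkQ) := by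
    rintro _ ⟨x, rfl⟩
    obtain ⟨a, ha⟩ := h x
    exact ⟨a, LinearMap.ext fun y => ((Submodule.Quotient.eq K).2 (ha y)).symm⟩
  obtain ⟨φ, hφ⟩ := exists_comp_eq_of_range_le_range _ _ range_le
  exact ⟨φ, fun x y => (Submodule.Quotient.eq K).1 (LinearMap.congr_fun₂ hφ x y).symm⟩

section Derivations

variable {R L : Type*} [CommRing R] [AddCommGroup L] [Module R L]

/-- The module of derivations of the algebra `L` with bracket `b`. A bilinear map `p` is a left
biderivation when every `p x` lies in it, a right biderivation when every `p.flip y` does; `b` is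
a left Leibniz bracket when every left multiplication `b x` does. -/
def bracketDerivations (b : L →ₗ[R] L →ₗ[R] L) : Submodule R (L →ₗ[R] L) where
  carrier := {D | ∀ x y, D (b x y) = b (D x) y + b x (D y)}
  zero_mem' _ _ := by simp
  add_mem' {D E} hD hE x y := by
    simp only [LinearMap.add_apply, map_add, hD x y, hE x y]
    abel
  smul_mem' c D hD x y := by
    simp only [LinearMap.smul_apply, map_smul, hD x y, smul_add]

theorem exists_eq_leftMul_add_of_forall_mem_bracketDerivations
    {M : Type*} [AddCommMonoid M] [Module R M] [Module.Projective R M]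
    {b : L →ₗ[R] L →ₗ[R] L} {K : Submodule R L} (hb : ∀ x, b x ∈ bracketDerivations b)
    (hinner : ∀ D ∈ bracketDerivations b, ∃ a, ∀ y, D y - b a y ∈ K)
    {g : M →ₗ[R] L →ₗ[R] L} (hg : ∀ x, g x ∈ bracketDerivations b) :
    ∃ (φ : M →ₗ[R] L) (p : M →ₗ[R] L →ₗ[R] L), (∀ x y, p x y ∈ K) ∧
      (∀ x, p x ∈ bracketDerivations b) ∧ ∀ x y, g x y = b (φ x) y + p x y := by
  obtain ⟨φ, hφ⟩ := exists_linearMap_forall_sub_mem b g K fun x => hinner (g x) (hg x)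
  exact ⟨φ, g - b ∘ₗ φ, hφ, fun x => sub_mem (hg x) (hb (φ x)),
    fun x y => (add_sub_cancel (b (φ x) y) (g x y)).symm⟩

theorem mem_bracketDerivations_of_eq_leftMul_add {b : L →ₗ[R] L →ₗ[R] L}
    (hb : ∀ x, b x ∈ bracketDerivations b) {D E : L →ₗ[R] L} {a : L}
    (hE : E ∈ bracketDerivations b) (h : ∀ y, D y = b a y + E y) : D ∈ bracketDerivations b := by
  have hD : D = b a + E := LinearMap.ext h
  exact hD ▸ add_mem (hb a) hE

end Derivations

theorem stmt_7_general {R L : Type*} [CommRing R] [AddCommGroup L] [Module R L]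
    [Module.Projective R L] (b : L →ₗ[R] L →ₗ[R] L) (K : Submodule R L)
    (hleib : ∀ x y z : L, b x (b y z) = b y (b x z) + b (b x y) z)
    (hComplete : ∀ D : L →ₗ[R] L, (∀ x y : L, D (b x y) = b (D x) y + b x (D y)) →
      ∃ a : L, ∀ y : L, D y - b a y ∈ K)
    (f : L →ₗ[R] L →ₗ[R] L) :
    ((∀ x y z : L, f x (b y z) = b (f x y) z + b y (f x z)) ∧
     (∀ x y z : L, f (b x y) z = b (f x z) y + b x (f y z)))
    ↔
    ∃ (φ ψ : L →ₗ[R] L) (p q : L →ₗ[R] L →ₗ[R] L),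
      (∀ x y : L, p x y ∈ K) ∧
      (∀ x y z : L, p x (b y z) = b (p x y) z + b y (p x z)) ∧
      (∀ x y : L, q x y ∈ K) ∧
      (∀ x y z : L, q (b x y) z = b x (q y z) + b (q x z) y) ∧
      (∀ x y : L, f x y = b (φ x) y + p x y) ∧
      (∀ x y : L, f x y = b (ψ y) x + q x y) := by
  have hb (x : L) : b x ∈ bracketDerivations b := fun y z => (hleib x y z).trans (add_comm _ _)
  constructor
  · rintro ⟨hleft, hright⟩
    obtain ⟨φ, p, hpK, hp, hfp⟩ :=
      exists_eq_leftMul_add_of_forall_mem_bracketDerivations hb hComplete hleft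
    have hflip (z : L) : f.flip z ∈ bracketDerivations b := fun x y => hright x y z
    obtain ⟨ψ, q, hqK, hq, hfq⟩ :=
      exists_eq_leftMul_add_of_forall_mem_bracketDerivations hb hComplete hflip
    exact ⟨φ, ψ, p, q.flip, hpK, hp, fun x y => hqK y x,
      fun x y z => (hq z x y).trans (add_comm _ _), hfp, fun x y => hfq y x⟩
  · rintro ⟨φ, ψ, p, q, -, hp, -, hq, hfp, hfq⟩
    have hqflip (z : L) : q.flip z ∈ bracketDerivations b :=
      fun x y => (hq x y z).trans (add_comm _ _)
    have hflip (z : L) : f.flip z ∈ bracketDerivations b :=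
      mem_bracketDerivations_of_eq_leftMul_add hb (hqflip z) fun x => hfq x z
    exact ⟨fun x => mem_bracketDerivations_of_eq_leftMul_add hb (hp x) (hfp x),
      fun x y z => hflip z x y⟩

/-- Let `L` be a finite-dimensional left Leibniz algebra over a field of
characteristic zero which is BMS-complete. A bilinear map `f : L × L → L` is a biderivation
iff there exist linear maps `φ, ψ : L → L`, a left biderivation `p` and a right biderivation
`q`, both with values in `Leib(L)`, such that
`f(x,y) = [φ(x),y] + p(x,y) = [ψ(y),x] + q(x,y)` for all `x, y ∈ L`. -/
theorem stmt_7 (F : Type*) [Field F] [CharZero F] (L : Type*) [AddCommGroup L] [Module F L]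
    [FiniteDimensional F L]
    (b : L →ₗ[F] L →ₗ[F] L)
    (hleib : ∀ x y z : L, b x (b y z) = b y (b x z) + b (b x y) z)
    -- trivial center of the quotient Lie algebra L/Leib(L)
    (hZ : ∀ x : L, (∀ y : L, b x y ∈ leibnizKernel F L b) → x ∈ leibnizKernel F L b)
    -- every derivation agrees with a left multiplication modulo Leib(L)
    (hComplete : ∀ D : L →ₗ[F] L, (∀ x y : L, D (b x y) = b (D x) y + b x (D y)) →
      ∃ a : L, ∀ y : L, D y - b a y ∈ leibnizKernel F L b)
    (f : L →ₗ[F] L →ₗ[F] L) :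
    -- `f` is a biderivation: `f(x,-)` and `f(-,x)` are derivations for every `x`
    ((∀ x y z : L, f x (b y z) = b (f x y) z + b y (f x z)) ∧
     (∀ x y z : L, f (b x y) z = b (f x z) y + b x (f y z)))
    ↔
    ∃ (φ ψ : L →ₗ[F] L) (p q : L →ₗ[F] L →ₗ[F] L),
      (∀ x y : L, p x y ∈ leibnizKernel F L b) ∧
      -- `p` is a left biderivation
      (∀ x y z : L, p x (b y z) = b (p x y) z + b y (p x z)) ∧
      (∀ x y : L, q x y ∈ leibnizKernel F L b) ∧
      -- `q` is a right biderivation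
      (∀ x y z : L, q (b x y) z = b x (q y z) + b (q x z) y) ∧
      (∀ x y : L, f x y = b (φ x) y + p x y) ∧
      (∀ x y : L, f x y = b (ψ y) x + q x y) :=
  stmt_7_general b (leibnizKernel F L b) hleib hComplete f
end

section
/- Let L be a finite-dimensional left Leibniz algebra over a field F of characteristic zero that is AKS-complete. A bilinear map f : L × L → L is a biderivation of L if and only if there exist linear maps φ, ψ : L → L such that f(x,y) = [φ(x),y] = [ψ(y),x] for all x, y ∈ L. -/
/-!
The left Leibniz identity says that every left multiplication is a derivation, and completeness is
the converse, so the derivations of `L` are exactly the range of the bracket `b : L → End L`.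
A bilinear map `f` is thus a biderivation iff both `f` and `f.flip`, viewed as maps `L → End L`,
have range inside that of `b`. As `L` is projective, this holds iff both factor
linearly through `b`, and the factors are `φ` and `ψ`.
-/

theorem exists_linearMap_comp_eq_iff_range_le {R M N P : Type*} [Semiring R]
    [AddCommMonoid M] [Module R M] [AddCommMonoid N] [Module R N]
    [AddCommMonoid P] [Module R P] [Module.Projective R P]
    (g : M →ₗ[R] N) (f : P →ₗ[R] N) :
    (∃ φ : P →ₗ[R] M, g ∘ₗ φ = f) ↔ LinearMap.range f ≤ LinearMap.range g := by
  constructor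
  · rintro ⟨φ, rfl⟩
    exact LinearMap.range_comp_le_range φ g
  · intro hfg
    obtain ⟨φ, hφ⟩ := Module.projective_lifting_property g.rangeRestrict
      (f.codRestrict (LinearMap.range g) fun x ↦ hfg ⟨x, rfl⟩) g.surjective_rangeRestrict
    exact ⟨φ, LinearMap.ext fun x ↦ congrArg Subtype.val (LinearMap.congr_fun hφ x)⟩

section Biderivation

variable {R L : Type*} [CommSemiring R] [AddCommMonoid L] [Module R L]

/-- `D` is a derivation of the algebra whose bracket is the bilinear map `b`. Mathlib's `Derivation`
and `LieDerivation` do not apply, since `b` need be neither associative nor alternating. -/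
def IsDerivation (b : L →ₗ[R] L →ₗ[R] L) (D : L →ₗ[R] L) : Prop :=
  ∀ x y : L, D (b x y) = b (D x) y + b x (D y)

/-- `f` is a biderivation of the algebra with bracket `b`: a derivation in each argument
separately. -/
def IsBiderivation (b f : L →ₗ[R] L →ₗ[R] L) : Prop :=
  (∀ x : L, IsDerivation b (f x)) ∧ ∀ z : L, IsDerivation b (f.flip z)

variable {b : L →ₗ[R] L →ₗ[R] L}

theorem isBiderivation_iff {f : L →ₗ[R] L →ₗ[R] L} :
    IsBiderivation b f ↔
      (∀ x y z : L, f x (b y z) = b (f x y) z + b y (f x z)) ∧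
      (∀ x y z : L, f (b x y) z = b (f x z) y + b x (f y z)) :=
  and_congr_right' ⟨fun h x y z ↦ h z x y, fun h z x y ↦ h x y z⟩

theorem isDerivation_leftMul (hleib : ∀ x y z : L, b x (b y z) = b y (b x z) + b (b x y) z)
    (a : L) : IsDerivation b (b a) := fun x y ↦ by
  rw [hleib, add_comm]

theorem isDerivation_iff_mem_range
    (hleib : ∀ x y z : L, b x (b y z) = b y (b x z) + b (b x y) z)
    (hComplete : ∀ D : L →ₗ[R] L, IsDerivation b D → ∃ a : L, ∀ y : L, D y = b a y)
    {D : L →ₗ[R] L} : IsDerivation b D ↔ D ∈ LinearMap.range b := by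
  constructor
  · intro hD
    obtain ⟨a, ha⟩ := hComplete D hD
    exact ⟨a, (LinearMap.ext ha).symm⟩
  · rintro ⟨a, rfl⟩
    exact isDerivation_leftMul hleib a

theorem isBiderivation_iff_range_le
    (hleib : ∀ x y z : L, b x (b y z) = b y (b x z) + b (b x y) z)
    (hComplete : ∀ D : L →ₗ[R] L, IsDerivation b D → ∃ a : L, ∀ y : L, D y = b a y)
    {f : L →ₗ[R] L →ₗ[R] L} :
    IsBiderivation b f ↔
      LinearMap.range f ≤ LinearMap.range b ∧ LinearMap.range f.flip ≤ LinearMap.range b := by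
  simp only [IsBiderivation, isDerivation_iff_mem_range hleib hComplete,
    LinearMap.range_le_iff_comap, Submodule.eq_top_iff', Submodule.mem_comap]

theorem stmt_8_general [Module.Projective R L]
    (hleib : ∀ x y z : L, b x (b y z) = b y (b x z) + b (b x y) z)
    (hComplete : ∀ D : L →ₗ[R] L, IsDerivation b D → ∃ a : L, ∀ y : L, D y = b a y)
    (f : L →ₗ[R] L →ₗ[R] L) :
    IsBiderivation b f ↔
      ∃ φ ψ : L →ₗ[R] L, ∀ x y : L, f x y = b (φ x) y ∧ f x y = b (ψ y) x := by
  rw [isBiderivation_iff_range_le hleib hComplete, ← exists_linearMap_comp_eq_iff_range_le,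
    ← exists_linearMap_comp_eq_iff_range_le]
  constructor
  · rintro ⟨⟨φ, hφ⟩, ψ, hψ⟩
    exact ⟨φ, ψ, fun x y ↦
      ⟨(LinearMap.congr_fun₂ hφ x y).symm, (LinearMap.congr_fun₂ hψ y x).symm⟩⟩
  · rintro ⟨φ, ψ, h⟩
    exact ⟨⟨φ, LinearMap.ext₂ fun x y ↦ (h x y).1.symm⟩,
      ψ, LinearMap.ext₂ fun y x ↦ (h x y).2.symm⟩

end Biderivation

/-- Let `L` be a finite-dimensional left Leibniz algebra over a field of
characteristic zero which is AKS-complete (`Z(L) = 0` and every derivation is a left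
multiplication). A bilinear map `f : L × L → L` is a biderivation iff there exist linear
maps `φ, ψ : L → L` such that `f(x,y) = [φ(x),y] = [ψ(y),x]` for all `x, y ∈ L`. -/
theorem stmt_8 (F : Type*) [Field F] [CharZero F] (L : Type*) [AddCommGroup L] [Module F L]
    [FiniteDimensional F L]
    (b : L →ₗ[F] L →ₗ[F] L)
    (hleib : ∀ x y z : L, b x (b y z) = b y (b x z) + b (b x y) z)
    -- trivial center
    (hZ : ∀ x : L, (∀ y : L, b x y = 0 ∧ b y x = 0) → x = 0)
    -- every derivation is a left multiplication
    (hComplete : ∀ D : L →ₗ[F] L, (∀ x y : L, D (b x y) = b (D x) y + b x (D y)) →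
      ∃ a : L, ∀ y : L, D y = b a y)
    (f : L →ₗ[F] L →ₗ[F] L) :
    -- `f` is a biderivation: `f(x,-)` and `f(-,x)` are derivations for every `x`
    ((∀ x y z : L, f x (b y z) = b (f x y) z + b y (f x z)) ∧
     (∀ x y z : L, f (b x y) z = b (f x z) y + b x (f y z)))
    ↔
    ∃ φ ψ : L →ₗ[F] L, ∀ x y : L, f x y = b (φ x) y ∧ f x y = b (ψ y) x :=
  isBiderivation_iff.symm.trans (stmt_8_general hleib hComplete f)
end

section
/- Let L be a finite-dimensional complete Lie algebra over a field F of characteristic zero. A bilinear map f : L × L → L is a biderivation of L if and only if there exist linear maps φ, ψ : L → L such that f(x,y) = [φ(x),y] = [x,ψ(y)] for all x, y ∈ L. -/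
/-!
If `M` is an `L`-module without nonzero invariants and every derivation `L → M` is inner, then
`m ↦ ⁅·, m⁆` is a linear isomorphism from `M` onto the module of derivations `L → M`. A linear
family of derivations is therefore the same thing as a linear family of elements of `M`, and a
biderivation is such a family in each of its two arguments.
-/

open LieModule

section Coefficients

variable {R L M X : Type*} [CommRing R] [LieRing L] [LieAlgebra R L]
  [AddCommGroup M] [Module R M] [LieRingModule L M] [LieModule R L M]
  [AddCommGroup X] [Module R X]

theorem injective_inner_of_maxTrivSubmodule_eq_bot (hM : maxTrivSubmodule R L M = ⊥) :
    Function.Injective (LieDerivation.inner R L M) := by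
  refine (injective_iff_map_eq_zero _).2 fun m hm ↦ ?_
  have hm_mem : m ∈ maxTrivSubmodule R L M := fun x ↦ LieDerivation.congr_fun hm x
  rwa [hM, LieSubmodule.mem_bot] at hm_mem

theorem forall_leibniz_iff_exists_linearMap_lie (hM : maxTrivSubmodule R L M = ⊥)
    (hinner : Function.Surjective (LieDerivation.inner R L M)) (g : X →ₗ[R] L →ₗ[R] M) :
    (∀ x y z, g x ⁅y, z⁆ = ⁅y, g x z⁆ - ⁅z, g x y⁆) ↔
      ∃ φ : X →ₗ[R] M, ∀ x y, g x y = ⁅y, φ x⁆ := by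
  constructor
  · intro hg
    let derivations : X →ₗ[R] LieDerivation R L M :=
      { toFun x := ⟨g x, hg x⟩
        map_add' x x' := by ext; simp
        map_smul' c x := by ext; simp }
    let innerEquiv : M ≃ₗ[R] LieDerivation R L M :=
      .ofBijective (LieDerivation.inner R L M)
        ⟨injective_inner_of_maxTrivSubmodule_eq_bot hM, hinner⟩
    exact ⟨innerEquiv.symm ∘ₗ derivations, fun x y ↦
      (LieDerivation.congr_fun (innerEquiv.apply_symm_apply (derivations x)) y).symm⟩
  · rintro ⟨φ, hφ⟩ x y z
    simp only [hφ, lie_lie]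

/-- The sign in front of `⁅y, φ x⁆` makes it the right action of `y` on `φ x`, which is `⁅φ x, y⁆`
when `M = L`. -/
theorem stmt_9_general (hM : maxTrivSubmodule R L M = ⊥)
    (hinner : Function.Surjective (LieDerivation.inner R L M)) (f : L →ₗ[R] L →ₗ[R] M) :
    ((∀ x y z : L, f x ⁅y, z⁆ = ⁅y, f x z⁆ - ⁅z, f x y⁆) ∧
      (∀ x y z : L, f ⁅x, y⁆ z = ⁅x, f y z⁆ - ⁅y, f x z⁆)) ↔
      ∃ φ ψ : L →ₗ[R] M, ∀ x y : L, f x y = -⁅y, φ x⁆ ∧ f x y = ⁅x, ψ y⁆ := by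
  have left_iff := forall_leibniz_iff_exists_linearMap_lie hM hinner f
  have right_iff := forall_leibniz_iff_exists_linearMap_lie hM hinner f.flip
  simp only [LinearMap.flip_apply] at right_iff
  constructor
  · rintro ⟨hleft, hright⟩
    obtain ⟨φ, hφ⟩ := left_iff.1 hleft
    obtain ⟨ψ, hψ⟩ := right_iff.1 fun z x y ↦ hright x y z
    exact ⟨-φ, ψ, fun x y ↦ ⟨by simp [hφ], hψ y x⟩⟩
  · rintro ⟨φ, ψ, h⟩
    have hleft := left_iff.2 ⟨-φ, fun x y ↦ by simp [(h x y).1]⟩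
    have hright := right_iff.2 ⟨ψ, fun y x ↦ (h x y).2⟩
    exact ⟨hleft, fun x y z ↦ hright z x y⟩

end Coefficients

section Adjoint

variable {R L : Type*} [CommRing R] [LieRing L] [LieAlgebra R L]

theorem center_eq_bot_iff_forall_lie_eq_zero :
    LieAlgebra.center R L = ⊥ ↔ ∀ x : L, (∀ y : L, ⁅x, y⁆ = 0) → x = 0 := by
  have hskew (x y : L) : ⁅y, x⁆ = 0 ↔ ⁅x, y⁆ = 0 := by rw [← lie_skew, neg_eq_zero]
  simp only [LieSubmodule.eq_bot_iff, mem_maxTrivSubmodule, hskew]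

theorem surjective_inner_iff_forall_leibniz :
    Function.Surjective (LieDerivation.inner R L L) ↔
      ∀ D : L →ₗ[R] L, (∀ x y : L, D ⁅x, y⁆ = ⁅D x, y⁆ + ⁅x, D y⁆) →
        ∃ a : L, ∀ y : L, D y = ⁅a, y⁆ := by
  constructor
  · intro hinner D hD
    obtain ⟨a, ha⟩ := hinner ⟨D, fun x y ↦ by rw [hD, sub_eq_neg_add, lie_skew]⟩
    exact ⟨-a, fun y ↦ by simpa using (LieDerivation.congr_fun ha y).symm⟩
  · intro hD D
    obtain ⟨a, ha⟩ := hD D fun x y ↦ (D.apply_lie_eq_add x y).trans (add_comm _ _)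
    exact ⟨-a, LieDerivation.ext fun y ↦ by simpa using (ha y).symm⟩

end Adjoint

/-- Let `L` be a finite-dimensional complete Lie algebra over a field of
characteristic zero (trivial center and every derivation is inner). A bilinear map
`f : L × L → L` is a biderivation iff there exist linear maps `φ, ψ : L → L` such that
`f(x,y) = [φ(x),y] = [x,ψ(y)]` for all `x, y ∈ L`. -/
theorem stmt_9 (F : Type*) [Field F] [CharZero F] (L : Type*) [LieRing L] [LieAlgebra F L]
    [Module.Finite F L]
    -- trivial center
    (hZ : ∀ x : L, (∀ y : L, ⁅x, y⁆ = 0) → x = 0)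
    -- every derivation is inner
    (hComplete : ∀ D : L →ₗ[F] L, (∀ x y : L, D ⁅x, y⁆ = ⁅D x, y⁆ + ⁅x, D y⁆) →
      ∃ a : L, ∀ y : L, D y = ⁅a, y⁆)
    (f : L →ₗ[F] L →ₗ[F] L) :
    -- `f` is a biderivation: `f(x,-)` and `f(-,x)` are derivations for every `x`
    ((∀ x y z : L, f x ⁅y, z⁆ = ⁅f x y, z⁆ + ⁅y, f x z⁆) ∧
     (∀ x y z : L, f ⁅x, y⁆ z = ⁅f x z, y⁆ + ⁅x, f y z⁆))
    ↔
    ∃ φ ψ : L →ₗ[F] L, ∀ x y : L, f x y = ⁅φ x, y⁆ ∧ f x y = ⁅x, ψ y⁆ := by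
  simpa only [sub_eq_neg_add, lie_skew] using stmt_9_general
    (center_eq_bot_iff_forall_lie_eq_zero.2 hZ) (surjective_inner_iff_forall_leibniz.2 hComplete) f
end

section
/- Let L be a left Leibniz algebra over a field F of characteristic zero and let g : L → L be a skew-commuting linear map. Then the bilinear map f : L × L → L defined by f(x,y) = [g(x),y] is a symmetric biderivation of L, i.e. f is a biderivation and f(x,y) = f(y,x) for all x,y ∈ L. -/
/-!
The left Leibniz identity says that every left multiplication `[a, -]` is a derivation, so each
`f(x, -) = [g(x), -]` is one. Skew-commutation says that `f` is symmetric, so `f(-, y) = f(y, -)`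
is a derivation as well.
-/

section LeibnizRule

variable {L : Type*}

/-- The product rule `D [y, z] = [D y, z] + [y, D z]`, the condition that makes a linear map `D` a
derivation. Linearity is not part of the definition, so that the rule makes sense for any binary
operation in place of the bracket. -/
def SatisfiesLeibnizRule [Add L] (bracket : L → L → L) (D : L → L) : Prop :=
  ∀ y z, D (bracket y z) = bracket (D y) z + bracket y (D z)

theorem satisfiesLeibnizRule_bracket_left [AddCommMagma L] {bracket : L → L → L}
    (hleib : ∀ x y z,
      bracket x (bracket y z) = bracket y (bracket x z) + bracket (bracket x y) z) (x : L) :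
    SatisfiesLeibnizRule bracket (bracket x) :=
  fun y z => (hleib x y z).trans (add_comm _ _)

theorem SatisfiesLeibnizRule.swap_of_symm [Add L] {bracket f : L → L → L}
    (hf : ∀ x, SatisfiesLeibnizRule bracket (f x)) (hsymm : ∀ x y, f x y = f y x) (y : L) :
    SatisfiesLeibnizRule bracket (fun x => f x y) := by
  simpa only [hsymm _ y] using hf y

theorem stmt_15_general [AddCommMagma L] {bracket : L → L → L}
    (hleib : ∀ x y z,
      bracket x (bracket y z) = bracket y (bracket x z) + bracket (bracket x y) z)
    {g : L → L} (hg : ∀ x y, bracket (g x) y = bracket (g y) x) :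
    (∀ x, SatisfiesLeibnizRule bracket (fun y => bracket (g x) y)) ∧
    (∀ y, SatisfiesLeibnizRule bracket (fun x => bracket (g x) y)) ∧
    (∀ x y, bracket (g x) y = bracket (g y) x) :=
  have hleft (x : L) : SatisfiesLeibnizRule bracket (bracket (g x)) :=
    satisfiesLeibnizRule_bracket_left hleib (g x)
  ⟨hleft, SatisfiesLeibnizRule.swap_of_symm hleft hg, hg⟩

end LeibnizRule

/-- Let `L` be a left Leibniz algebra over a field of characteristic zero
and `g : L → L` a skew-commuting linear map (`[g(x),y] = [g(y),x]` for all `x, y`). Then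
`f(x,y) = [g(x),y]` is a symmetric biderivation of `L`. -/
theorem stmt_15 (F : Type*) [Field F] [CharZero F] (L : Type*) [AddCommGroup L] [Module F L]
    (b : L →ₗ[F] L →ₗ[F] L)
    (hleib : ∀ x y z : L, b x (b y z) = b y (b x z) + b (b x y) z)
    (g : L →ₗ[F] L)
    (hg : ∀ x y : L, b (g x) y = b (g y) x) :
    -- `f(x,y) = [g(x),y]` is a biderivation: `f(x,-)` and `f(-,y)` are derivations
    (∀ x y z : L, b (g x) (b y z) = b (b (g x) y) z + b y (b (g x) z)) ∧
    (∀ x y z : L, b (g (b x z)) y = b (b (g x) y) z + b x (b (g z) y)) ∧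
    -- and it is symmetric
    (∀ x y : L, b (g x) y = b (g y) x) := by
  obtain ⟨hleft, hright, hsymm⟩ := stmt_15_general (bracket := fun x y => b x y) hleib hg
  exact ⟨hleft, fun x y z => hright y x z, hsymm⟩
end
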